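/- arXiv:1610.04341 — 5 statements merged into one kernel-verified Lean document; each statement's English description precedes it below -/
import Mathlib

section
/- Suppose that every eigenvalue of ψ is a Weil number of weight j (relative to q) for some integer j (possibly depending on the eigenvalue). Then there exists a family (H_i)_{i ∈ ℤ} of ψ-invariant K-subspaces of H, with H_i = 0 for all but finitely many i, such that H is the internal direct sum of the subspaces H_i and, for each i, the pair (H_i, ψ restricted to H_i) is pure of weight i. -/
open Polynomial

noncomputable section

/-- `α` is a Weil number of weight `i` relative to `q`: it is algebraic over `ℚ` and every
complex root of its minimal polynomial over `ℚ` has absolute value `q ^ (i / 2)`. -/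
def IsWeilNumber {F : Type*} [Field F] [CharZero F] (q : ℕ) (i : ℤ) (α : F) : Prop :=
  IsAlgebraic ℚ α ∧
    ∀ z : ℂ, aeval z (minpoly ℚ α) = 0 → ‖z‖ = (q : ℝ) ^ ((i : ℝ) / 2)

/-- `(H, ψ)` is pure of weight `i` (relative to `q`): every eigenvalue of `ψ`, i.e. every root
of its characteristic polynomial in a fixed algebraic closure of `K`, is a Weil number of
weight `i`. -/
def IsPureOfWeight (q : ℕ) (i : ℤ) {K : Type*} [Field K] [CharZero K]
    {H : Type*} [AddCommGroup H] [Module K H] [FiniteDimensional K H]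
    (ψ : H →ₗ[K] H) : Prop :=
  ∀ α : AlgebraicClosure K, aeval α (LinearMap.charpoly ψ) = 0 → IsWeilNumber q i α

/-!
The weight of an algebraic number depends only on its minimal polynomial over `ℚ`, hence is constant
on the roots of each irreducible factor over `K` of the characteristic polynomial of `ψ`. Choosing
a weight for each of these factors and grouping them accordingly writes the characteristic
polynomial as a product of pairwise coprime polynomials `g i`, and `H` is the direct sum of the
kernels of the `g i (ψ)` by Cayley–Hamilton and Bézout. Since `g i` annihilates the restriction of
`ψ` to the `i`-th summand, every eigenvalue of that restriction is a root of `g i` and so has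
weight `i`.
-/

open scoped Function in
theorem pairwise_isCoprime_prod_fiber {R σ ι : Type*} [CommSemiring R] [Fintype σ] [DecidableEq ι]
    {u : σ → R} (hu : Pairwise (IsCoprime on u)) (label : σ → ι) :
    Pairwise (IsCoprime on fun i => ∏ a with label a = i, u a) := by
  intro i j hij
  refine IsCoprime.prod_left fun a ha => IsCoprime.prod_right fun b hb => hu ?_
  rintro rfl
  exact hij ((Finset.mem_filter.mp ha).2.symm.trans (Finset.mem_filter.mp hb).2)

open UniqueFactorizationMonoid in
theorem isCoprime_pow_of_mem_normalizedFactors {R : Type*} [CommRing R] [IsDomain R]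
    [IsPrincipalIdealRing R] [NormalizationMonoid R] {f g h : R}
    (hg : g ∈ normalizedFactors f) (hh : h ∈ normalizedFactors f) (hne : g ≠ h)
    (m n : ℕ) : IsCoprime (g ^ m) (h ^ n) :=
  IsCoprime.pow <| (irreducible_of_normalized_factor g hg).coprime_iff_not_dvd.mpr
    fun hdvd => hne (normalizedFactors_eq_of_dvd f g hg h hh hdvd)

section KernelDecomposition

variable {R M : Type*} [CommRing R] [AddCommGroup M] [Module R M]

theorem ker_aeval_le_of_dvd (φ : Module.End R M) {f g : R[X]} (h : f ∣ g) :
    LinearMap.ker (aeval φ f) ≤ LinearMap.ker (aeval φ g) := by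
  obtain ⟨k, rfl⟩ := h
  rw [mul_comm, map_mul]
  exact LinearMap.ker_le_ker_comp _ _

theorem apply_mem_ker_aeval (φ : Module.End R M) (f : R[X]) :
    ∀ x ∈ LinearMap.ker (aeval φ f), φ x ∈ LinearMap.ker (aeval φ f) := by
  intro x hx
  have hcomm : aeval φ (f * X) x = aeval φ (X * f) x := by rw [mul_comm]
  simpa [LinearMap.mem_ker.mp hx] using hcomm

theorem coe_aeval_restrict_apply (φ : Module.End R M) {W : Submodule R M}
    (hW : ∀ x ∈ W, φ x ∈ W) (f : R[X]) (y : W) :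
    (aeval (φ.restrict hW) f y : M) = aeval φ f (y : M) := by
  induction f using Polynomial.induction_on' with
  | add f g hf hg => simp [hf, hg]
  | monomial n a => simp [aeval_monomial, Module.End.pow_restrict n]

theorem aeval_restrict_ker_aeval (φ : Module.End R M) (f : R[X]) :
    aeval (φ.restrict (apply_mem_ker_aeval φ f)) f = 0 := by
  ext y
  rw [coe_aeval_restrict_apply]
  exact y.2

variable {ι : Type*} {f : ι → R[X]}

open scoped Function in
theorem iSup_ker_aeval_eq_ker_aeval_prod (φ : Module.End R M) {s : Finset ι}
    (hf : (s : Set ι).Pairwise (IsCoprime on f)) :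
    ⨆ i ∈ s, LinearMap.ker (aeval φ (f i)) = LinearMap.ker (aeval φ (∏ i ∈ s, f i)) := by
  classical
  induction s using Finset.induction_on with
  | empty => simp [Module.End.one_eq_id]
  | insert a s ha ih =>
    have hcop : IsCoprime (f a) (∏ i ∈ s, f i) :=
      IsCoprime.prod_right fun i hi =>
        hf (by simp) (by simp [hi]) (ne_of_mem_of_not_mem hi ha).symm
    rw [Finset.iSup_insert, Finset.prod_insert ha, ih (hf.mono (by simp)),
      sup_ker_aeval_eq_ker_aeval_mul_of_coprime φ hcop]

open scoped Function in
theorem iSupIndep_ker_aeval (φ : Module.End R M) (hf : Pairwise (IsCoprime on f)) :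
    iSupIndep fun i => LinearMap.ker (aeval φ (f i)) := by
  classical
  rw [iSupIndep_iff_finsetSum_eq_zero_imp_eq_zero]
  intro s v hv hsum i hi
  have hcop : IsCoprime (f i) (∏ j ∈ s.erase i, f j) :=
    IsCoprime.prod_right fun j hj => hf (Finset.ne_of_mem_erase hj).symm
  have hrest : ∑ j ∈ s.erase i, v j ∈ LinearMap.ker (aeval φ (∏ j ∈ s.erase i, f j)) :=
    sum_mem fun j hj =>
      ker_aeval_le_of_dvd φ (Finset.dvd_prod_of_mem f hj) (hv j (Finset.mem_of_mem_erase hj))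
  have hvi : v i = -∑ j ∈ s.erase i, v j := by
    rw [eq_neg_iff_add_eq_zero, Finset.add_sum_erase s v hi, hsum]
  exact Submodule.disjoint_def.mp (disjoint_ker_aeval_of_isCoprime φ hcop) _ (hv i hi)
    (hvi ▸ neg_mem hrest)

open scoped Function in
theorem isInternal_ker_aeval [DecidableEq ι] (φ : Module.End R M)
    (hf : Pairwise (IsCoprime on f)) {s : Finset ι} (hs : aeval φ (∏ i ∈ s, f i) = 0) :
    DirectSum.IsInternal fun i => LinearMap.ker (aeval φ (f i)) := by
  refine DirectSum.isInternal_submodule_of_iSupIndep_of_iSup_eq_top (iSupIndep_ker_aeval φ hf) ?_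
  rw [eq_top_iff]
  calc ⊤ = LinearMap.ker (aeval φ (∏ i ∈ s, f i)) := by rw [hs, LinearMap.ker_zero]
    _ = ⨆ i ∈ s, LinearMap.ker (aeval φ (f i)) :=
      (iSup_ker_aeval_eq_ker_aeval_prod φ (hf.set_pairwise _)).symm
    _ ≤ ⨆ i, LinearMap.ker (aeval φ (f i)) := iSup₂_le_iSup _ _

end KernelDecomposition

section Field

variable {K L : Type*} [Field K] [Field L] [Algebra K L]

theorem aeval_eq_zero_of_aeval_charpoly_eq_zero {V : Type*} [AddCommGroup V] [Module K V]
    [FiniteDimensional K V] {φ : Module.End K V} {f : K[X]} (hf : aeval φ f = 0) {α : L}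
    (hα : aeval α φ.charpoly = 0) : aeval α f = 0 := by
  have heigenvalue : Module.End.HasEigenvalue (φ.baseChange L) α := by
    rw [Module.End.hasEigenvalue_iff_isRoot_charpoly, LinearMap.charpoly_baseChange, IsRoot.def,
      eval_map_algebraMap, hα]
  obtain ⟨v, hv⟩ := heigenvalue.exists_hasEigenvector
  have hzero : aeval (φ.baseChange L) f = 0 :=
    (aeval_algHom_apply (Module.End.baseChangeHom K L V) φ f).trans (by rw [hf, map_zero])
  have hsmul : aeval α f • v = 0 := by
    simpa [hzero] using
      (Module.End.aeval_apply_of_hasEigenvector (p := f.map (algebraMap K L)) hv).symm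
  exact (smul_eq_zero.mp hsmul).resolve_right hv.2

theorem isConjRoot_of_irreducible {g : K[X]} (hg : Irreducible g) {α β : L}
    (hα : aeval α g = 0) (hβ : aeval β g = 0) : IsConjRoot K α β := by
  rw [IsConjRoot, ← minpoly.eq_of_irreducible hg hα, minpoly.eq_of_irreducible hg hβ]

theorem exists_forall_root_of_irreducible [IsAlgClosed L] {ι : Type*} {P : ι → L → Prop}
    (hP : ∀ i α β, IsConjRoot K α β → P i α → P i β) {g : K[X]} (hg : Irreducible g)
    (hroot : ∀ α : L, aeval α g = 0 → ∃ i, P i α) : ∃ i, ∀ α : L, aeval α g = 0 → P i α := by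
  obtain ⟨α, hα⟩ := IsAlgClosed.exists_aeval_eq_zero L g (degree_pos_of_irreducible hg).ne'
  obtain ⟨i, hi⟩ := hroot α hα
  exact ⟨i, fun β hβ => hP i α β (isConjRoot_of_irreducible hg hα hβ) hi⟩

open UniqueFactorizationMonoid in
open scoped Function in
theorem exists_pairwise_isCoprime_dvd_prod [IsAlgClosed L] {ι : Type*} {P : ι → L → Prop}
    (hP : ∀ i α β, IsConjRoot K α β → P i α → P i β) {f : K[X]} (hf : f ≠ 0)
    (hroot : ∀ α : L, aeval α f = 0 → ∃ i, P i α) :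
    ∃ (g : ι → K[X]) (s : Finset ι), Pairwise (IsCoprime on g) ∧ f ∣ ∏ i ∈ s, g i ∧
      ∀ i, ∀ α : L, aeval α (g i) = 0 → P i α := by
  classical
  let factors := (normalizedFactors f).toFinset
  let power (p : factors) : K[X] := (p : K[X]) ^ (normalizedFactors f).count (p : K[X])
  have hmem (p : factors) : (p : K[X]) ∈ normalizedFactors f := Multiset.mem_toFinset.mp p.2
  have hlabel (p : factors) : ∃ i, ∀ α : L, aeval α (p : K[X]) = 0 → P i α :=
    exists_forall_root_of_irreducible hP (irreducible_of_normalized_factor _ (hmem p))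
      fun α hα => hroot α (aeval_eq_zero_of_dvd_aeval_eq_zero
        (dvd_of_mem_normalizedFactors (hmem p)) hα)
  choose label hlabel using hlabel
  refine ⟨fun i => ∏ p with label p = i, power p, Finset.univ.image label, ?coprime, ?dvd, ?roots⟩
  case coprime =>
    exact pairwise_isCoprime_prod_fiber (fun p r hpr => isCoprime_pow_of_mem_normalizedFactors
      (hmem p) (hmem r) (Subtype.coe_ne_coe.mpr hpr) _ _) label
  case dvd =>
    have hprod : ∏ i ∈ Finset.univ.image label, ∏ p with label p = i, power p =
        (normalizedFactors f).prod := by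
      rw [Finset.prod_fiberwise_of_maps_to fun p hp => Finset.mem_image_of_mem label hp,
        Finset.prod_multiset_count]
      exact Finset.prod_coe_sort factors fun p => p ^ (normalizedFactors f).count p
    rw [hprod]
    exact (prod_normalizedFactors hf).symm.dvd
  case roots =>
    intro i α hα
    rw [map_prod, Finset.prod_eq_zero_iff] at hα
    obtain ⟨p, hp, hpα⟩ := hα
    rw [map_pow] at hpα
    exact (Finset.mem_filter.mp hp).2 ▸ hlabel p α (eq_zero_of_pow_eq_zero hpα)

theorem exists_isInternal_forall_aeval_charpoly_restrict [IsAlgClosed L] {ι : Type*}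
    [DecidableEq ι] {P : ι → L → Prop} (hP : ∀ i α β, IsConjRoot K α β → P i α → P i β)
    {V : Type*} [AddCommGroup V] [Module K V] [FiniteDimensional K V] (φ : Module.End K V)
    (hφ : ∀ α : L, aeval α φ.charpoly = 0 → ∃ i, P i α) :
    ∃ (W : ι → Submodule K V) (hW : ∀ i, ∀ x ∈ W i, φ x ∈ W i),
      DirectSum.IsInternal W ∧
      ∀ i, ∀ α : L, aeval α (φ.restrict (hW i)).charpoly = 0 → P i α := by
  obtain ⟨g, s, hcoprime, hdvd, hroots⟩ :=
    exists_pairwise_isCoprime_dvd_prod hP φ.charpoly_monic.ne_zero hφ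
  have hprod : aeval φ (∏ i ∈ s, g i) = 0 :=
    aeval_eq_zero_of_dvd_aeval_eq_zero hdvd φ.aeval_self_charpoly
  exact ⟨fun i => LinearMap.ker (aeval φ (g i)), fun i => apply_mem_ker_aeval φ (g i),
    isInternal_ker_aeval φ hcoprime hprod, fun i α hα =>
      hroots i α (aeval_eq_zero_of_aeval_charpoly_eq_zero (aeval_restrict_ker_aeval φ (g i)) hα)⟩

end Field

theorem IsWeilNumber.of_isConjRoot {K L : Type*} [Field K] [CharZero K] [Field L] [CharZero L]
    [Algebra K L] {q : ℕ} {i : ℤ} {α β : L} (hα : IsWeilNumber q i α) (h : IsConjRoot K α β) :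
    IsWeilNumber q i β := by
  have hconj : IsConjRoot ℚ α β := h.of_isScalarTower hα.1.isIntegral
  exact ⟨(hconj.isIntegral hα.1.isIntegral).isAlgebraic, hconj ▸ hα.2⟩

theorem statement1_general (q : ℕ) {K : Type*} [Field K] [CharZero K]
    {H : Type*} [AddCommGroup H] [Module K H] [FiniteDimensional K H] (ψ : H →ₗ[K] H)
    (hψ : ∀ α : AlgebraicClosure K, aeval α (LinearMap.charpoly ψ) = 0 →
      ∃ j : ℤ, IsWeilNumber q j α) :
    ∃ (Hf : ℤ → Submodule K H) (hinv : ∀ i, ∀ x ∈ Hf i, ψ x ∈ Hf i),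
      {i : ℤ | Hf i ≠ ⊥}.Finite ∧
      DirectSum.IsInternal Hf ∧
      ∀ i : ℤ, IsPureOfWeight q i (ψ.restrict (hinv i)) := by
  obtain ⟨Hf, hinv, hinternal, hpure⟩ := exists_isInternal_forall_aeval_charpoly_restrict
    (P := IsWeilNumber q) (fun _ _ _ hconj hα => hα.of_isConjRoot hconj) ψ hψ
  exact ⟨Hf, hinv, WellFoundedGT.finite_ne_bot_of_iSupIndep hinternal.submodule_iSupIndep,
    hinternal, hpure⟩

/-- if every eigenvalue of `ψ` is a Weil number of some integral weight, then
`H` decomposes as an internal direct sum of `ψ`-invariant subspaces `Hf i` (almost all zero)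
such that `(Hf i, ψ|_{Hf i})` is pure of weight `i` for every `i`. -/
theorem statement1 (p n₀ : ℕ) (hp : p.Prime) (hn₀ : 0 < n₀)
    (K : Type*) [Field K] [CharZero K]
    (H : Type*) [AddCommGroup H] [Module K H] [FiniteDimensional K H]
    (ψ : H →ₗ[K] H)
    (hψ : ∀ α : AlgebraicClosure K, aeval α (LinearMap.charpoly ψ) = 0 →
      ∃ j : ℤ, IsWeilNumber (p ^ n₀) j α) :
    ∃ (Hf : ℤ → Submodule K H) (hinv : ∀ i, ∀ x ∈ Hf i, ψ x ∈ Hf i),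
      {i : ℤ | Hf i ≠ ⊥}.Finite ∧
      DirectSum.IsInternal Hf ∧
      ∀ i : ℤ, IsPureOfWeight (p ^ n₀) i (ψ.restrict (hinv i)) :=
  statement1_general (p ^ n₀) ψ hψ

end
end

section
/- Let (H, ψ) and (H', ψ') be as in the context and let f : H → H' be a K-linear map with f ∘ ψ = ψ' ∘ f. Let (H_i)_{i ∈ ℤ} and (H'_i)_{i ∈ ℤ} be families of ψ-invariant (respectively ψ'-invariant) subspaces, with all but finitely many members zero, realizing H and H' as internal direct sums such that (H_i, ψ|_{H_i}) and (H'_i, ψ'|_{H'_i}) are pure of weight i for every i. Then f(H_i) ⊆ H'_i for every i ∈ ℤ. -/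
/-!
The weight-`i` part of a weight decomposition can be recovered from `ψ` alone: it is the subspace
of all vectors killed by `P(ψ)` for some nonzero polynomial `P` whose roots are all Weil numbers of
weight `i`. If `P(ψ)` kills `x`, then `P(ψ')` kills `f x`, so `f` respects these subspaces. By
Cayley–Hamilton they contain the pure invariant subspaces of weight `i`. They are independent,
because a Weil number has only one weight and polynomials without common roots are coprime; hence
pure subspaces which together span the whole space cannot be strictly smaller.
-/

open Polynomial

noncomputable section

section AevalIntertwining

variable {R M N : Type*} [CommSemiring R] [AddCommMonoid M] [Module R M] [AddCommMonoid N]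
  [Module R N]

theorem aeval_comp_of_comp_eq {φ : Module.End R M} {φ' : Module.End R N} {f : M →ₗ[R] N}
    (h : φ' ∘ₗ f = f ∘ₗ φ) (P : R[X]) : aeval φ' P ∘ₗ f = f ∘ₗ aeval φ P := by
  induction P using Polynomial.induction_on' with
  | add P Q hP hQ => rw [map_add, map_add, LinearMap.add_comp, LinearMap.comp_add, hP, hQ]
  | monomial n a =>
    rw [← C_mul_X_pow_eq_monomial, ← smul_eq_C_mul, map_smul, map_smul, aeval_X_pow, aeval_X_pow,
      LinearMap.smul_comp, LinearMap.comp_smul, Module.End.commute_pow_left_of_commute h]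

end AevalIntertwining

section SpectralSubspace

variable {K L V W : Type*} [Field K] [Field L] [Algebra K L] [AddCommGroup V] [Module K V]
  [AddCommGroup W] [Module K W] {S T : Set L}

/-- The subspace of `V` on which `ψ` has its eigenvalues in `S`: the vectors killed by `P(ψ)` for
some nonzero polynomial `P` over `K` all of whose roots in the extension `L` of `K` lie in `S`.
Annihilating polynomials take the place of generalized eigenvectors because the
eigenvalues need not lie in `K`. -/
def spectralSubspace (S : Set L) (ψ : Module.End K V) : Submodule K V where
  carrier := {x | ∃ P : K[X], P ≠ 0 ∧ (∀ α : L, aeval α P = 0 → α ∈ S) ∧ aeval ψ P x = 0}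
  zero_mem' := ⟨1, one_ne_zero, by simp, map_zero _⟩
  add_mem' := by
    rintro x y ⟨P, hP, hPS, hPx⟩ ⟨Q, hQ, hQS, hQy⟩
    refine ⟨P * Q, mul_ne_zero hP hQ, fun α hα ↦ ?_, ?_⟩
    · rw [map_mul, mul_eq_zero] at hα
      exact hα.elim (hPS α) (hQS α)
    · have hx : aeval ψ (P * Q) x = 0 := by
        rw [mul_comm, map_mul, Module.End.mul_apply, hPx, map_zero]
      have hy : aeval ψ (P * Q) y = 0 := by rw [map_mul, Module.End.mul_apply, hQy, map_zero]
      rw [map_add, hx, hy, add_zero]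
  smul_mem' := by
    rintro c x ⟨P, hP, hPS, hPx⟩
    exact ⟨P, hP, hPS, by rw [map_smul, hPx, smul_zero]⟩

theorem spectralSubspace_mono (hST : S ⊆ T) (ψ : Module.End K V) :
    spectralSubspace S ψ ≤ spectralSubspace T ψ :=
  fun _ ⟨P, hP, hPS, hPx⟩ ↦ ⟨P, hP, fun α hα ↦ hST (hPS α hα), hPx⟩

theorem map_spectralSubspace_le {ψ : Module.End K V} {ψ' : Module.End K W} {f : V →ₗ[K] W}
    (h : ψ' ∘ₗ f = f ∘ₗ ψ) (S : Set L) :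
    (spectralSubspace S ψ).map f ≤ spectralSubspace S ψ' := by
  rintro _ ⟨x, ⟨P, hP, hPS, hPx⟩, rfl⟩
  refine ⟨P, hP, hPS, ?_⟩
  calc aeval ψ' P (f x) = f (aeval ψ P x) := LinearMap.congr_fun (aeval_comp_of_comp_eq h P) x
    _ = 0 := by rw [hPx, map_zero]

theorem spectralSubspace_eq_top [FiniteDimensional K V] {ψ : Module.End K V}
    (hS : ∀ α : L, aeval α ψ.charpoly = 0 → α ∈ S) : spectralSubspace S ψ = ⊤ :=
  eq_top_iff.2 fun x _ ↦ ⟨ψ.charpoly, ψ.charpoly_monic.ne_zero, hS,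
    by rw [LinearMap.aeval_self_charpoly, LinearMap.zero_apply]⟩

theorem le_spectralSubspace {ψ : Module.End K V} {A : Submodule K V} [FiniteDimensional K A]
    (hA : ∀ x ∈ A, ψ x ∈ A) (hS : ∀ α : L, aeval α (ψ.restrict hA).charpoly = 0 → α ∈ S) :
    A ≤ spectralSubspace S ψ :=
  calc A = (spectralSubspace S (ψ.restrict hA)).map A.subtype := by
        rw [spectralSubspace_eq_top hS, Submodule.map_subtype_top]
    _ ≤ spectralSubspace S ψ := map_spectralSubspace_le (LinearMap.subtype_comp_restrict hA).symm S

theorem disjoint_spectralSubspace [IsAlgClosed L] (hST : Disjoint S T) (ψ : Module.End K V) :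
    Disjoint (spectralSubspace S ψ) (spectralSubspace T ψ) := by
  rw [Submodule.disjoint_def]
  rintro x ⟨P, -, hPS, hPx⟩ ⟨Q, -, hQT, hQx⟩
  have hPQ : IsCoprime P Q := by
    rw [isCoprime_iff_aeval_ne_zero_of_isAlgClosed K L]
    intro α
    by_contra! hα
    exact Set.disjoint_left.1 hST (hPS α hα.1) (hQT α hα.2)
  exact Submodule.disjoint_def.1 (disjoint_ker_aeval_of_isCoprime ψ hPQ) x hPx hQx

theorem iSupIndep_spectralSubspace [IsAlgClosed L] {ι : Type*} {S : ι → Set L}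
    (hS : Pairwise fun i j ↦ Disjoint (S i) (S j)) (ψ : Module.End K V) :
    iSupIndep fun i ↦ spectralSubspace (S i) ψ := by
  intro i
  have hle : ⨆ (j) (_ : j ≠ i), spectralSubspace (S j) ψ ≤
      spectralSubspace (⋃ (j) (_ : j ≠ i), S j) ψ :=
    iSup₂_le fun j hj ↦ spectralSubspace_mono (Set.subset_biUnion_of_mem (u := S) hj) ψ
  have hdisj : Disjoint (S i) (⋃ (j) (_ : j ≠ i), S j) :=
    Set.disjoint_iUnion₂_right.2 fun _ hj ↦ hS hj.symm
  exact (disjoint_spectralSubspace hdisj ψ).mono_right hle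

end SpectralSubspace

theorem IsWeilNumber.weight_unique {F : Type*} [Field F] [CharZero F] {q : ℕ} (hq : 1 < q)
    {i j : ℤ} {α : F} (hi : IsWeilNumber q i α) (hj : IsWeilNumber q j α) : i = j := by
  obtain ⟨z, hz⟩ := IsAlgClosed.exists_aeval_eq_zero ℂ (minpoly ℚ α)
    (minpoly.degree_pos hi.1.isIntegral).ne'
  have hpow : (q : ℝ) ^ ((i : ℝ) / 2) = (q : ℝ) ^ ((j : ℝ) / 2) :=
    (hi.2 z hz).symm.trans (hj.2 z hz)
  have hhalf : (i : ℝ) / 2 = (j : ℝ) / 2 :=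
    (Real.strictMono_rpow_of_base_gt_one (Nat.one_lt_cast.2 hq)).injective hpow
  exact Int.cast_injective ((div_left_inj' (two_ne_zero (α := ℝ))).1 hhalf)

section WeightSubspace

variable {K V W : Type*} [Field K] [CharZero K] [AddCommGroup V] [Module K V] [AddCommGroup W]
  [Module K W] {q : ℕ}

/-- The weight-`i` part of `(V, ψ)` relative to `q`, defined without reference to a weight
decomposition of `V`, so that it is functorial in `(V, ψ)`. -/
def weightSubspace (q : ℕ) (i : ℤ) (ψ : Module.End K V) : Submodule K V :=
  spectralSubspace {α : AlgebraicClosure K | IsWeilNumber q i α} ψ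

theorem le_weightSubspace {i : ℤ} {ψ : Module.End K V} {A : Submodule K V}
    [FiniteDimensional K A] (hinv : ∀ x ∈ A, ψ x ∈ A)
    (hpure : IsPureOfWeight q i (ψ.restrict hinv)) : A ≤ weightSubspace q i ψ :=
  le_spectralSubspace hinv hpure

theorem iSupIndep_weightSubspace (hq : 1 < q) (ψ : Module.End K V) :
    iSupIndep fun i ↦ weightSubspace q i ψ :=
  iSupIndep_spectralSubspace
    (fun _ _ hij ↦ Set.disjoint_left.2 fun _ hi hj ↦ hij (hi.weight_unique hq hj)) ψ

theorem eq_weightSubspace_of_iSup_eq_top (hq : 1 < q) {ψ : Module.End K V}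
    {A : ℤ → Submodule K V} [∀ i, FiniteDimensional K (A i)] (hinv : ∀ i, ∀ x ∈ A i, ψ x ∈ A i)
    (hpure : ∀ i, IsPureOfWeight q i (ψ.restrict (hinv i))) (htop : ⨆ i, A i = ⊤) (i : ℤ) :
    A i = weightSubspace q i ψ :=
  congrFun (((iSupIndep_weightSubspace hq ψ).le_iff_eq_of_iSup_eq_top htop).1
    fun j ↦ le_weightSubspace (hinv j) (hpure j)) i

theorem statement4_general (hq : 1 < q) {ψ : Module.End K V} {ψ' : Module.End K W}
    {f : V →ₗ[K] W} (hf : f ∘ₗ ψ = ψ' ∘ₗ f)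
    {i : ℤ} {A : Submodule K V} [FiniteDimensional K A] (hinv : ∀ x ∈ A, ψ x ∈ A)
    (hpure : IsPureOfWeight q i (ψ.restrict hinv))
    {A' : ℤ → Submodule K W} [∀ j, FiniteDimensional K (A' j)]
    (hinv' : ∀ j, ∀ x ∈ A' j, ψ' x ∈ A' j)
    (hpure' : ∀ j, IsPureOfWeight q j (ψ'.restrict (hinv' j))) (htop : ⨆ j, A' j = ⊤) :
    A.map f ≤ A' i :=
  calc A.map f ≤ (weightSubspace q i ψ).map f := Submodule.map_mono (le_weightSubspace hinv hpure)
    _ ≤ weightSubspace q i ψ' := map_spectralSubspace_le hf.symm _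
    _ = A' i := (eq_weightSubspace_of_iSup_eq_top hq hinv' hpure' htop i).symm

end WeightSubspace

/-- a linear map intertwining `ψ` and `ψ'` respects the weight decompositions:
`f (H i) ⊆ H' i` for every `i`. -/
theorem statement4 (p n₀ : ℕ) (hp : p.Prime) (hn₀ : 0 < n₀)
    (K : Type*) [Field K] [CharZero K]
    (H : Type*) [AddCommGroup H] [Module K H] [FiniteDimensional K H]
    (H' : Type*) [AddCommGroup H'] [Module K H'] [FiniteDimensional K H']
    (ψ : H →ₗ[K] H) (ψ' : H' →ₗ[K] H')
    (f : H →ₗ[K] H') (hf : f ∘ₗ ψ = ψ' ∘ₗ f)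
    (A : ℤ → Submodule K H) (A' : ℤ → Submodule K H')
    (hinv : ∀ i, ∀ x ∈ A i, ψ x ∈ A i) (hinv' : ∀ i, ∀ x ∈ A' i, ψ' x ∈ A' i)
    (hfin : {i : ℤ | A i ≠ ⊥}.Finite) (hfin' : {i : ℤ | A' i ≠ ⊥}.Finite)
    (hint : DirectSum.IsInternal A) (hint' : DirectSum.IsInternal A')
    (hpure : ∀ i : ℤ, IsPureOfWeight (p ^ n₀) i (ψ.restrict (hinv i)))
    (hpure' : ∀ i : ℤ, IsPureOfWeight (p ^ n₀) i (ψ'.restrict (hinv' i))) :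
    ∀ i : ℤ, (A i).map f ≤ A' i := by
  exact fun i ↦ statement4_general (Nat.one_lt_pow hn₀.ne' hp.one_lt) hf (hinv i) (hpure i) hinv'
    hpure' hint'.submodule_iSup_eq_top

end
end

section
/- Let K be a number field with ring of integers 𝓞_K and let c ∈ 𝓞_K. Suppose that for all but finitely many nonzero prime ideals 𝔭 of 𝓞_K one has c^p − c ∈ 𝔭, where p denotes the characteristic of the residue field 𝓞_K/𝔭. Then c is a rational integer, i.e., c lies in the image of ℤ in 𝓞_K. -/
open NumberField

/-!
Let `L = ℚ(c)`. For almost every prime `p`, the element `c ^ p - c` lies in all primes of `L` above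
`p`. As `c` generates the residue fields at the primes not dividing `f'(c)`, where `f` is the
minimal polynomial of `c`, and `L` is unramified there, almost every `p` splits completely in `L`.
If `L ≠ ℚ`, then almost every `p` is the norm of two distinct primes `P p` and `Q p`. For a suitable
`M` and each `k`, extending multiplicatively gives two ideals of norm `M * k + 1`, built from the
`P p` and from the `Q p`. The former are coprime to the latter, so their products are pairwise
distinct. This yields at least a constant times `X log X` ideals of norm at most `X`, whereas there
are only `O(X)`.
-/

section

open Filter Finset Topology

lemma le_card_filter_mul_le (X : ℕ) :
    X * (∑ k ∈ range X, 1 / ((k : ℝ) + 1) - 1) ≤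
      #{x ∈ range X ×ˢ range X | (x.1 + 1) * (x.2 + 1) ≤ X} := by
  have hcard : #{x ∈ range X ×ˢ range X | (x.1 + 1) * (x.2 + 1) ≤ X} =
      ∑ k ∈ range X, X / (k + 1) := by
    rw [card_filter, sum_product]
    refine sum_congr rfl fun k _ => ?_
    rw [← card_filter, ← card_range (X / (k + 1))]
    congr 1
    ext j
    have hiff : (k + 1) * (j + 1) ≤ X ↔ j < X / (k + 1) := by
      rw [← Nat.succ_le_iff, Nat.le_div_iff_mul_le k.succ_pos, mul_comm]
    have hlt : j < X / (k + 1) → j < X := fun h => h.trans_le (Nat.div_le_self _ _)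
    simp only [mem_filter, mem_range, hiff]
    tauto
  rw [hcard, Nat.cast_sum, mul_sub, mul_sum, mul_one]
  calc ∑ k ∈ range X, (X : ℝ) * (1 / (k + 1)) - X
      = ∑ k ∈ range X, ((X : ℝ) / (k + 1) - 1) := by simp [div_eq_mul_inv]
    _ ≤ ∑ k ∈ range X, ((X / (k + 1) : ℕ) : ℝ) := sum_le_sum fun k _ => by
      rw [← Nat.floor_div_eq_div (K := ℝ)]
      exact_mod_cast (Nat.sub_one_lt_floor _).le

lemma tendsto_card_filter_mul_le_div_atTop :
    Tendsto (fun X : ℕ => (#{x ∈ range X ×ˢ range X | (x.1 + 1) * (x.2 + 1) ≤ X} : ℝ) / X)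
      atTop atTop := by
  refine tendsto_atTop_mono' _ ?_
    (tendsto_atTop_add_const_right _ (-1) Real.tendsto_sum_range_one_div_nat_succ_atTop)
  filter_upwards [eventually_gt_atTop 0] with X hX
  rw [le_div_iff₀' (by exact_mod_cast hX)]
  exact le_card_filter_mul_le X

lemma injective_mul_of_isCoprime {R ι κ : Type*} [CommSemiring R] {I : ι → Ideal R}
    {J : κ → Ideal R} (hI : I.Injective) (hJ : J.Injective)
    (hIJ : ∀ i k, IsCoprime (I i) (J k)) :
    (fun x : ι × κ => I x.1 * J x.2).Injective := by
  have hle : ∀ {i i' k k'}, I i * J k = I i' * J k' → I i' ≤ I i ∧ J k' ≤ J k :=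
    fun {i i' k k'} h =>
      ⟨Ideal.le_of_dvd ((hIJ i k').dvd_of_dvd_mul_right (h ▸ dvd_mul_right _ _)),
        Ideal.le_of_dvd ((hIJ i' k).symm.dvd_of_dvd_mul_left (h ▸ dvd_mul_left _ _))⟩
  rintro ⟨i, k⟩ ⟨i', k'⟩ h
  exact Prod.ext (hI (le_antisymm (hle h.symm).1 (hle h).1))
    (hJ (le_antisymm (hle h.symm).2 (hle h).2))

lemma absNorm_factorization_prod {R : Type*} [CommRing R] [IsDedekindDomain R]
    [Module.Free ℤ R] [Module.Finite ℤ R] {P : ℕ → Ideal R} {n : ℕ} (hn : n ≠ 0)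
    (hP : ∀ p ∈ n.primeFactors, Ideal.absNorm (P p) = p) :
    Ideal.absNorm (n.factorization.prod fun p e => P p ^ e) = n := by
  rw [map_finsuppProd]
  refine Eq.trans (Finsupp.prod_congr fun p hp => ?_) (Nat.prod_factorization_pow_eq_self hn)
  rw [map_pow, hP p hp]

lemma isCoprime_factorization_prod {R : Type*} [CommSemiring R] {F G : ℕ → R} {m n : ℕ}
    (h : ∀ p ∈ m.primeFactors, ∀ q ∈ n.primeFactors, IsCoprime (F p) (G q)) :
    IsCoprime (m.factorization.prod fun p e => F p ^ e)
      (n.factorization.prod fun p e => G p ^ e) :=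
  IsCoprime.prod_left fun p hp => IsCoprime.prod_right fun q hq => (h p hp q hq).pow

lemma isCoprime_of_prime_absNorm {R : Type*} [CommRing R] [IsDedekindDomain R]
    [Module.Free ℤ R] {P Q : Ideal R} (hP : (Ideal.absNorm P).Prime)
    (hQ : (Ideal.absNorm Q).Prime) (hPQ : P ≠ Q) : IsCoprime P Q := by
  have hmax : ∀ I : Ideal R, (Ideal.absNorm I).Prime → I.IsMaximal := fun I hI =>
    (Ideal.isPrime_of_irreducible_absNorm hI).isMaximal
      fun h => hI.ne_zero (by rw [h, Ideal.absNorm_bot])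
  have := hmax P hP
  have := hmax Q hQ
  exact Ideal.isCoprime_of_isMaximal hPQ

variable {K : Type*} [Field K] [NumberField K]

lemma exists_not_isCoprime_of_absNorm_le {I J : ℕ → Ideal (𝓞 K)} {M : ℕ}
    (hI : I.Injective) (hJ : J.Injective) (hIM : ∀ k, Ideal.absNorm (I k) ≤ M * (k + 1))
    (hJM : ∀ k, Ideal.absNorm (J k) ≤ M * (k + 1)) :
    ∃ j k, ¬ IsCoprime (I j) (J k) := by
  by_contra! hIJ
  have hM : 0 < M := Nat.pos_of_ne_zero fun hM => by
    have hbot : ∀ k, I k = ⊥ := fun k =>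
      Ideal.absNorm_eq_zero_iff.mp (by simpa [hM] using hIM k)
    exact zero_ne_one (hI ((hbot 0).trans (hbot 1).symm))
  have hcard : ∀ X : ℕ, #{x ∈ range X ×ˢ range X | (x.1 + 1) * (x.2 + 1) ≤ X} ≤
      Nat.card {A : Ideal (𝓞 K) // (Ideal.absNorm A : ℝ) ≤ (M ^ 2 * X : ℕ)} := fun X => by
    have : Finite {A : Ideal (𝓞 K) // (Ideal.absNorm A : ℝ) ≤ (M ^ 2 * X : ℕ)} := by
      simp only [Nat.cast_le]
      exact (Ideal.finite_setOfPred_absNorm_le (M ^ 2 * X)).to_subtype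
    rw [← Nat.card_eq_finsetCard]
    refine Nat.card_le_card_of_injective (fun x => ⟨I x.1.1 * J x.1.2, ?_⟩) fun x y h =>
      Subtype.ext (injective_mul_of_isCoprime hI hJ hIJ (congrArg Subtype.val h))
    rw [Nat.cast_le, map_mul]
    calc Ideal.absNorm (I x.1.1) * Ideal.absNorm (J x.1.2)
        ≤ M * (x.1.1 + 1) * (M * (x.1.2 + 1)) := Nat.mul_le_mul (hIM _) (hJM _)
      _ = M ^ 2 * ((x.1.1 + 1) * (x.1.2 + 1)) := by ring
      _ ≤ M ^ 2 * X := Nat.mul_le_mul_left _ (mem_filter.mp x.2).2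
  have hbounded := (Ideal.tendsto_norm_le_div_atTop K).comp
    (tendsto_natCast_atTop_atTop.comp (tendsto_id.const_mul_atTop' (pow_pos hM 2)))
  refine not_tendsto_nhds_of_tendsto_atTop (tendsto_atTop_mono (fun X => ?_)
    (tendsto_card_filter_mul_le_div_atTop.atTop_div_const
      (by positivity : (0 : ℝ) < M ^ 2))) _ hbounded
  simp only [Function.comp_apply, id_eq, div_div, Nat.cast_mul, Nat.cast_pow, mul_comm (X : ℝ)]
  gcongr
  exact_mod_cast hcard X

lemma exists_prime_eq_of_absNorm_eq {P Q : ℕ → Ideal (𝓞 K)} {M : ℕ} (hM : 0 < M)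
    (hP : ∀ p : ℕ, p.Prime → ¬ p ∣ M → Ideal.absNorm (P p) = p)
    (hQ : ∀ p : ℕ, p.Prime → ¬ p ∣ M → Ideal.absNorm (Q p) = p) :
    ∃ p : ℕ, p.Prime ∧ ¬ p ∣ M ∧ P p = Q p := by
  by_contra! hne
  have hprime : ∀ {k p}, p ∈ (M * k + 1).primeFactors → p.Prime ∧ ¬ p ∣ M := fun {k _} hp => by
    refine ⟨Nat.prime_of_mem_primeFactors hp, fun hpM => ?_⟩
    exact (Nat.prime_of_mem_primeFactors hp).not_dvd_one
      ((Nat.dvd_add_right (hpM.mul_right k)).mp (Nat.dvd_of_mem_primeFactors hp))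
  let I (A : ℕ → Ideal (𝓞 K)) (k : ℕ) : Ideal (𝓞 K) :=
    (M * k + 1).factorization.prod fun p e => A p ^ e
  have hnorm : ∀ {A}, (∀ p : ℕ, p.Prime → ¬ p ∣ M → Ideal.absNorm (A p) = p) →
      ∀ k, Ideal.absNorm (I A k) = M * k + 1 := fun hA k =>
    absNorm_factorization_prod (Nat.succ_ne_zero _) fun p hp => hA p (hprime hp).1 (hprime hp).2
  have hinj : ∀ {A}, (∀ k, Ideal.absNorm (I A k) = M * k + 1) → (I A).Injective :=
    fun hA j k h => by
      have hjk := congrArg Ideal.absNorm h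
      rw [hA, hA] at hjk
      exact Nat.eq_of_mul_eq_mul_left hM (Nat.succ_injective hjk)
  have hle : ∀ {A}, (∀ k, Ideal.absNorm (I A k) = M * k + 1) →
      ∀ k, Ideal.absNorm (I A k) ≤ M * (k + 1) :=
    fun hA k => (hA k).trans_le (Nat.add_le_add_left hM _)
  obtain ⟨j, k, hjk⟩ := exists_not_isCoprime_of_absNorm_le (hinj (hnorm hP)) (hinj (hnorm hQ))
    (hle (hnorm hP)) (hle (hnorm hQ))
  refine hjk (isCoprime_factorization_prod fun p hp q hq => ?_)
  obtain ⟨hp, hpM⟩ := hprime hp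
  obtain ⟨hq, hqM⟩ := hprime hq
  have hPp := hP p hp hpM
  have hQq := hQ q hq hqM
  refine isCoprime_of_prime_absNorm (hPp.symm ▸ hp) (hQq.symm ▸ hq) fun h => ?_
  obtain rfl : p = q := by rw [← hPp, h, hQq]
  exact hne p hp hpM h

variable (K) in
theorem infinite_setOf_prime_subsingleton_absNorm :
    {p : ℕ | p.Prime ∧ {P : Ideal (𝓞 K) | Ideal.absNorm P = p}.Subsingleton}.Infinite := by
  intro hfin
  let M := ∏ p ∈ hfin.toFinset, p
  have hM : 0 < M := prod_pos fun p hp => (hfin.mem_toFinset.mp hp).1.pos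
  have htwo : ∀ p : ℕ, p.Prime → ¬ p ∣ M → ∃ P Q : Ideal (𝓞 K),
      Ideal.absNorm P = p ∧ Ideal.absNorm Q = p ∧ P ≠ Q := fun p hp hpM => by
    have hnontriv : {P : Ideal (𝓞 K) | Ideal.absNorm P = p}.Nontrivial :=
      Set.not_subsingleton_iff.mp fun hsub =>
        hpM (dvd_prod_of_mem _ (hfin.mem_toFinset.mpr ⟨hp, hsub⟩))
    obtain ⟨P, hP, Q, hQ, hPQ⟩ := hnontriv
    exact ⟨P, Q, hP, hQ, hPQ⟩
  choose! P Q hP hQ hPQ using htwo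
  obtain ⟨p, hp, hpM, h⟩ := exists_prime_eq_of_absNorm_eq hM hP hQ
  exact hPQ p hp hpM h

end

section

open Polynomial

lemma ringChar_quotient_eq_of_natCast_mem {R : Type*} [CommRing R] {I : Ideal R} (hI : I ≠ ⊤)
    {p : ℕ} (hp : p.Prime) (hpI : (p : R) ∈ I) : ringChar (R ⧸ I) = p := by
  have : Nontrivial (R ⧸ I) := Ideal.Quotient.nontrivial_iff.mpr hI
  have : CharP (R ⧸ I) p := (CharP.charP_iff_prime_eq_zero hp).mpr <| by
    rwa [← map_natCast (Ideal.Quotient.mk I), Ideal.Quotient.eq_zero_iff_mem]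
  exact ringChar.eq _ p

lemma finite_setOf_pow_sub_notMem_radical {R : Type*} [CommRing R] [CharZero R] {c : R}
    (h : {P : Ideal R | P ≠ ⊥ ∧ P.IsPrime ∧ c ^ ringChar (R ⧸ P) - c ∉ P}.Finite) :
    {p : ℕ | p.Prime ∧ c ^ p - c ∉ (Ideal.span {(p : R)}).radical}.Finite := by
  refine (h.image fun P => ringChar (R ⧸ P)).subset ?_
  rintro p ⟨hp, hcp⟩
  simp only [Ideal.radical_eq_sInf, Ideal.mem_sInf, Set.mem_ofPred_eq, not_forall] at hcp
  obtain ⟨P, ⟨hpP, hP⟩, hcP⟩ := hcp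
  rw [Ideal.span_singleton_le_iff_mem] at hpP
  have hchar := ringChar_quotient_eq_of_natCast_mem hP.ne_top hp hpP
  refine ⟨P, ⟨?_, hP, by rwa [hchar]⟩, hchar⟩
  rintro rfl
  exact hp.ne_zero (Nat.cast_eq_zero.mp (Ideal.mem_bot.mp hpP))

lemma comap_radical_map_of_isIntegral {A B : Type*} [CommRing A] [CommRing B] [Algebra A B]
    [Algebra.IsIntegral A B] [FaithfulSMul A B] (I : Ideal A) :
    ((I.map (algebraMap A B)).radical).comap (algebraMap A B) = I.radical := by
  refine le_antisymm (fun x hx => ?_) ?_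
  · rw [Ideal.radical_eq_sInf, Ideal.mem_sInf]
    rintro P ⟨hIP, hP⟩
    obtain ⟨Q, -, hQ, hQP⟩ := Ideal.exists_ideal_over_prime_of_isIntegral P (⊥ : Ideal B) <| by
      rw [← RingHom.ker_eq_comap_bot, (RingHom.injective_iff_ker_eq_bot _).mp
        (FaithfulSMul.algebraMap_injective A B)]
      exact bot_le
    rw [← hQP] at hIP ⊢
    exact hQ.radical_le_iff.mpr (Ideal.map_le_iff_le_comap.mpr hIP) hx
  · rw [← Ideal.map_le_iff_le_comap]
    exact Ideal.map_radical_le _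

lemma card_quotient_eq_of_pow_sub_mem {R : Type*} [CommRing R] {θ : R} {p : ℕ} [Fact p.Prime]
    {Q : Ideal R} [Q.IsMaximal] (hpQ : (p : R) ∈ Q) (hθ : θ ^ p - θ ∈ Q)
    (hcond : ¬ conductor ℤ θ ≤ Q) : Nat.card (R ⧸ Q) = p := by
  let _ : Field (R ⧸ Q) := Ideal.Quotient.field Q
  have : CharP (R ⧸ Q) p := ringChar.of_eq
    (ringChar_quotient_eq_of_natCast_mem Ideal.IsPrime.ne_top' Fact.out hpQ)
  have hadjoin : ∀ y ∈ Algebra.adjoin ℤ {θ},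
      Ideal.Quotient.mk Q y ∈ (⊥ : Subfield (R ⧸ Q)) := by
    have hle : Algebra.adjoin ℤ {θ} ≤
        subalgebraOfSubring ((⊥ : Subfield (R ⧸ Q)).toSubring.comap (Ideal.Quotient.mk Q)) :=
      Algebra.adjoin_singleton_le <| by
        refine (Subfield.mem_bot_iff_pow_eq_self (R ⧸ Q) p).mpr ?_
        rw [← sub_eq_zero]
        exact Ideal.Quotient.eq_zero_iff_mem.mpr hθ
    exact fun y hy => hle hy
  obtain ⟨d, hd, hdQ⟩ := SetLike.not_le_iff_exists.mp hcond
  have htop : (⊥ : Subfield (R ⧸ Q)) = ⊤ := by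
    refine eq_top_iff.mpr fun x _ => ?_
    obtain ⟨y, rfl⟩ := Ideal.Quotient.mk_surjective x
    have hdy := hadjoin _ (mem_conductor_iff.mp hd y)
    rw [map_mul] at hdy
    rw [← mul_div_cancel_left₀ (Ideal.Quotient.mk Q y)
      (Ideal.Quotient.eq_zero_iff_mem.not.mpr hdQ)]
    exact div_mem hdy (hadjoin d (conductor_subset_adjoin hd))
  rw [← Subfield.card_bot (R ⧸ Q) p, htop]
  exact (Nat.card_congr Subfield.topEquiv.toEquiv).symm

lemma aeval_derivative_minpoly_ne_zero {A B : Type*} [CommRing A] [IsDomain A]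
    [IsIntegrallyClosed A] [CharZero A] [CommRing B] [IsDomain B] [Algebra A B]
    [Module.IsTorsionFree A B] {x : B} (hx : IsIntegral A x) :
    aeval x (derivative (minpoly A x)) ≠ 0 := fun h => by
  refine (minpoly.IsIntegrallyClosed.degree_le_of_ne_zero (fun h0 => ?_) h).not_gt
    (degree_derivative_lt (minpoly.ne_zero hx))
  exact (minpoly.natDegree_pos hx).ne' (derivative_eq_zero.mp h0)

lemma eq_of_unique_isMaximal_of_not_sq_dvd {R : Type*} [CommRing R] [IsDedekindDomain R]
    {I Q : Ideal R} (hIQ : I ≤ Q) (huniq : ∀ P : Ideal R, P.IsMaximal → I ≤ P → P = Q)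
    (hsq : ¬ Q ^ 2 ∣ I) : I = Q := by
  obtain ⟨J, rfl⟩ := Ideal.dvd_iff_le.mpr hIQ
  suffices hJ : J = ⊤ by rw [hJ, Ideal.mul_top]
  by_contra hJ
  obtain ⟨P, hP, hJP⟩ := Ideal.exists_le_maximal J hJ
  obtain rfl := huniq P hP (Ideal.mul_le_right.trans hJP)
  exact hsq (sq P ▸ mul_dvd_mul_left P (Ideal.dvd_iff_le.mpr hJP))

variable {K : Type*} [Field K] [NumberField K]

lemma not_sq_dvd_span_natCast {p : ℕ} (hp : p.Prime) {Q : Ideal (𝓞 K)}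
    (hQ : ¬ differentIdeal ℤ (𝓞 K) ≤ Q) : ¬ Q ^ 2 ∣ Ideal.span {(p : 𝓞 K)} := fun h => by
  have : Fact p.Prime := ⟨hp⟩
  have := Int.ideal_span_isMaximal_of_prime p
  refine hQ (Ideal.le_of_dvd ?_)
  simpa using pow_sub_one_dvd_differentIdeal ℤ (p := Ideal.span {(p : ℤ)}) Q 2
    (by simpa using hp.ne_zero) (by simpa [Ideal.map_span] using h)

lemma finrank_eq_one_of_pow_sub_mem_radical {θ : 𝓞 K}
    (hθ : Algebra.adjoin ℚ {(θ : K)} = ⊤) {p : ℕ} (hp : p.Prime)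
    (hpow : θ ^ p - θ ∈ (Ideal.span {(p : 𝓞 K)}).radical)
    (hD : ¬ p ∣ Ideal.absNorm (Ideal.span {aeval θ (derivative (minpoly ℤ θ))}))
    (huniq : {P : Ideal (𝓞 K) | Ideal.absNorm P = p}.Subsingleton) :
    Module.finrank ℚ K = 1 := by
  have : Fact p.Prime := ⟨hp⟩
  have hDQ : ∀ Q : Ideal (𝓞 K), Q.IsMaximal → (p : 𝓞 K) ∈ Q →
      ¬ Ideal.span {aeval θ (derivative (minpoly ℤ θ))} ≤ Q := fun Q hQ hpQ hle => hD <| by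
    rw [← ringChar_quotient_eq_of_natCast_mem hQ.ne_top hp hpQ, Ideal.ringChar_quot]
    exact (Int.absNorm_under_dvd_absNorm Q).trans (Ideal.absNorm_dvd_absNorm_of_le hle)
  -- `conductor_mul_differentIdeal` factors `(f'(θ))`, so one condition controls both the residue
  -- fields (through the conductor) and the ramification (through the different).
  simp only [← conductor_mul_differentIdeal ℤ ℚ K θ hθ] at hDQ
  have hnorm : ∀ Q : Ideal (𝓞 K), Q.IsMaximal → (p : 𝓞 K) ∈ Q → Ideal.absNorm Q = p :=
    fun Q hQ hpQ => card_quotient_eq_of_pow_sub_mem hpQ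
      (hQ.isPrime.radical_le_iff.mpr ((Ideal.span_singleton_le_iff_mem _).mpr hpQ) hpow)
      fun hle => hDQ Q hQ hpQ (Ideal.mul_le_left.trans hle)
  have hspan : Ideal.absNorm (Ideal.span {(p : 𝓞 K)}) = p ^ Module.finrank ℚ K := by
    rw [Ideal.absNorm_span_natCast, RingOfIntegers.rank]
  obtain ⟨Q, hQ, hle⟩ := Ideal.exists_le_maximal (Ideal.span {(p : 𝓞 K)}) fun h =>
    (Nat.one_lt_pow Module.finrank_pos.ne' hp.one_lt).ne (by rw [← hspan, h, Ideal.absNorm_top])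
  have hpQ := (Ideal.span_singleton_le_iff_mem Q).mp hle
  have hspanQ : Ideal.span {(p : 𝓞 K)} = Q := by
    refine eq_of_unique_isMaximal_of_not_sq_dvd hle (fun P hP hpP => ?_)
      (not_sq_dvd_span_natCast hp fun hle => hDQ Q hQ hpQ (Ideal.mul_le_right.trans hle))
    exact huniq (hnorm P hP ((Ideal.span_singleton_le_iff_mem P).mp hpP)) (hnorm Q hQ hpQ)
  rw [hspanQ, hnorm Q hQ hpQ] at hspan
  exact (Nat.pow_eq_self_iff hp.one_lt).mp hspan.symm

theorem finrank_eq_one_of_finite_setOf_pow_sub_notMem_radical {θ : 𝓞 K}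
    (hθ : Algebra.adjoin ℚ {(θ : K)} = ⊤)
    (hfin : {p : ℕ | p.Prime ∧ θ ^ p - θ ∉ (Ideal.span {(p : 𝓞 K)}).radical}.Finite) :
    Module.finrank ℚ K = 1 := by
  let D := Ideal.absNorm (Ideal.span {aeval θ (derivative (minpoly ℤ θ))})
  have hD : D ≠ 0 := by
    simpa [D, Ideal.absNorm_eq_zero_iff] using
      aeval_derivative_minpoly_ne_zero (RingOfIntegers.isIntegral θ)
  obtain ⟨p, ⟨hp, huniq⟩, hgood⟩ := ((infinite_setOf_prime_subsingleton_absNorm K).sdiff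
    (hfin.union D.divisors.finite_toSet)).nonempty
  simp only [Set.mem_union, Set.mem_ofPred_eq, hp, true_and, Finset.mem_coe, Nat.mem_divisors,
    hD, ne_eq, not_false_eq_true, and_true, not_or, not_not] at hgood
  exact finrank_eq_one_of_pow_sub_mem_radical hθ hp hgood.1 hgood.2 huniq

lemma exists_intCast_eq_of_finrank_adjoin_eq_one {c : 𝓞 K}
    (h : Module.finrank ℚ (IntermediateField.adjoin ℚ {(c : K)}) = 1) :
    ∃ n : ℤ, (n : 𝓞 K) = c := by
  obtain ⟨q, hq⟩ := IntermediateField.mem_bot.mp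
    (IntermediateField.finrank_adjoin_simple_eq_one_iff.mp h)
  have hint : IsIntegral ℤ q := by
    rw [← isIntegral_algebraMap_iff (algebraMap ℚ K).injective, hq]
    exact c.isIntegral_coe
  obtain ⟨n, rfl⟩ := IsIntegrallyClosed.isIntegral_iff.mp hint
  exact ⟨n, RingOfIntegers.ext (by simpa using hq)⟩

end

/-- an algebraic integer `c` in a number field `K` such that, for all but
finitely many nonzero prime ideals `P` of `𝓞 K`, `c ^ p - c ∈ P` (where `p` is the
characteristic of the residue field `𝓞 K ⧸ P`) is a rational integer. -/
theorem statement10 (K : Type*) [Field K] [NumberField K] (c : 𝓞 K)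
    (h : {P : Ideal (𝓞 K) | P ≠ ⊥ ∧ P.IsPrime ∧
        c ^ ringChar ((𝓞 K) ⧸ P) - c ∉ P}.Finite) :
    ∃ n : ℤ, (n : 𝓞 K) = c := by
  let L := IntermediateField.adjoin ℚ {(c : K)}
  let θ : 𝓞 L := ⟨IntermediateField.AdjoinSimple.gen ℚ (c : K),
    (isIntegral_algebraMap_iff (algebraMap L K).injective).mp c.isIntegral_coe⟩
  have hadjoin : Algebra.adjoin ℚ {(θ : L)} = ⊤ := by
    have hgen := (IntermediateField.adjoin.powerBasis
      (Algebra.IsIntegral.isIntegral (R := ℚ) (c : K))).adjoin_gen_eq_top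
    rwa [IntermediateField.adjoin.powerBasis_gen] at hgen
  refine exists_intCast_eq_of_finrank_adjoin_eq_one
    (finrank_eq_one_of_finite_setOf_pow_sub_notMem_radical hadjoin
      ((finite_setOf_pow_sub_notMem_radical h).subset ?_))
  rintro p ⟨hp, hθp⟩
  refine ⟨hp, fun hcp => hθp ?_⟩
  rw [← comap_radical_map_of_isIntegral (B := 𝓞 K), Ideal.map_span, Set.image_singleton,
    map_natCast, Ideal.mem_comap, map_sub, map_pow]
  exact hcp
end

section
/- Let k be a finite field, let X be a scheme, and let f : X → Spec k be a morphism of schemes that is quasi-compact and locally of finite type. Then the set of k-rational points of X, i.e., the set of scheme morphisms s : Spec k → X with f ∘ s = id_{Spec k}, is finite. -/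
open AlgebraicGeometry CategoryTheory

/-!
An `S`-morphism from `Spec R` into an affine `S`-scheme of finite type is determined by where it
sends finitely many algebra generators, so there are finitely many of them when `R` is finite. If
`R` is local, a morphism from `Spec R` lands in any open set containing the image of the closed
point, so it suffices to treat the finitely many members of an affine cover of the base change of
`X` to `Spec R`. A general finite ring is a finite product of local ones.
-/

universe u

theorem finite_algHom_of_finiteType (R A B : Type*) [CommSemiring R] [CommSemiring A] [Semiring B]
    [Algebra R A] [Algebra R B] [Algebra.FiniteType R A] [Finite B] : Finite (A →ₐ[R] B) := by
  obtain ⟨generators, h_generators⟩ := ‹Algebra.FiniteType R A›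
  refine Finite.of_injective (fun (φ : A →ₐ[R] B) (a : generators) ↦ φ a) fun φ ψ h ↦ ?_
  exact AlgHom.ext_of_adjoin_eq_top h_generators fun a ha ↦ congrFun h ⟨a, ha⟩

theorem finite_ringHom_comp_eq {R A B : Type*} [CommRing R] [CommRing A] [CommRing B] [Finite B]
    {g : R →+* A} (hg : g.FiniteType) (h : R →+* B) : Finite {φ : A →+* B // φ.comp g = h} := by
  algebraize [g, h]
  have := finite_algHom_of_finiteType R A B
  exact Finite.of_injective
    (fun φ ↦ (⟨φ.1, fun r ↦ congr($(φ.2) r)⟩ : A →ₐ[R] B))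
    fun φ ψ hφψ ↦ Subtype.ext congr(($hφψ : A →+* B))

section Lifts

variable {S T X : Scheme.{u}}

theorem finite_lifts_of_isAffine [IsAffine X] [IsAffine S] [Finite Γ(T, ⊤)]
    (f : X ⟶ S) [LocallyOfFiniteType f] (t : T ⟶ S) : Finite {s : T ⟶ X // s ≫ f = t} := by
  have := finite_ringHom_comp_eq (HasRingHomProperty.appTop @LocallyOfFiniteType f inferInstance)
    t.appTop.hom
  refine Finite.of_injective
    (β := {φ : Γ(X, ⊤) →+* Γ(T, ⊤) // φ.comp f.appTop.hom = t.appTop.hom})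
    (fun s ↦ ⟨s.1.appTop.hom, by rw [← CommRingCat.hom_comp, ← Scheme.Hom.comp_appTop, s.2]⟩) ?_
  intro s s' h
  exact Subtype.ext (ext_of_isAffine (CommRingCat.hom_ext congr(($h).1)))

theorem exists_lift_to_openCover {R : CommRingCat.{u}} [IsLocalRing R] (𝒰 : X.OpenCover)
    (s : Spec R ⟶ X) : ∃ (i : 𝒰.I₀) (s' : Spec R ⟶ 𝒰.X i), s' ≫ 𝒰.f i = s := by
  let x := s (IsLocalRing.closedPoint R)
  have preimage_eq_top : s ⁻¹ᵁ (𝒰.f (𝒰.idx x)).opensRange = ⊤ :=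
    Scheme.preimage_eq_top_of_closedPoint_mem s (𝒰.covers x)
  have range_subset : Set.range s ⊆ Set.range (𝒰.f (𝒰.idx x)) := by
    rintro _ ⟨y, rfl⟩
    exact preimage_eq_top.ge (Set.mem_univ y)
  exact ⟨𝒰.idx x, IsOpenImmersion.lift _ s range_subset, IsOpenImmersion.lift_fac _ s range_subset⟩

theorem finite_lifts_of_openCover {R : CommRingCat.{u}} [IsLocalRing R] (f : X ⟶ S)
    (t : Spec R ⟶ S) (𝒰 : X.OpenCover) [Finite 𝒰.I₀]
    (h : ∀ i, Finite {s : Spec R ⟶ 𝒰.X i // s ≫ 𝒰.f i ≫ f = t}) :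
    Finite {s : Spec R ⟶ X // s ≫ f = t} := by
  refine Finite.of_surjective
    (α := Σ i, {s : Spec R ⟶ 𝒰.X i // s ≫ 𝒰.f i ≫ f = t})
    (fun s ↦ ⟨s.2.1 ≫ 𝒰.f s.1, by rw [Category.assoc, s.2.2]⟩) ?_
  rintro ⟨s, hs⟩
  obtain ⟨i, s', rfl⟩ := exists_lift_to_openCover 𝒰 s
  exact ⟨⟨i, s', by rw [← hs, Category.assoc]⟩, rfl⟩

theorem finite_lifts_of_finite_sections_pullback (f : X ⟶ S) (t : T ⟶ S)
    [Finite {s : T ⟶ Limits.pullback f t // s ≫ Limits.pullback.snd f t = 𝟙 T}] :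
    Finite {s : T ⟶ X // s ≫ f = t} := by
  refine Finite.of_surjective
    (α := {s : T ⟶ Limits.pullback f t // s ≫ Limits.pullback.snd f t = 𝟙 T})
    (fun s ↦ ⟨s.1 ≫ Limits.pullback.fst f t, ?_⟩) ?_
  · rw [Category.assoc, Limits.pullback.condition, reassoc_of% s.2]
  · rintro ⟨s, hs⟩
    exact ⟨⟨Limits.pullback.lift s (𝟙 T) (by simpa using hs), Limits.pullback.lift_snd ..⟩,
      Subtype.ext (Limits.pullback.lift_fst ..)⟩

theorem finite_lifts_of_isLocalRing {R : CommRingCat.{u}} [IsLocalRing R] [Finite R] (f : X ⟶ S)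
    [QuasiCompact f] [LocallyOfFiniteType f] (t : Spec R ⟶ S) :
    Finite {s : Spec R ⟶ X // s ≫ f = t} := by
  let g := Limits.pullback.snd f t
  have : CompactSpace ↥(Limits.pullback f t) := QuasiCompact.compactSpace_of_compactSpace g
  have : Finite Γ(Spec R, ⊤) :=
    .of_equiv R (Scheme.ΓSpecIso R).commRingCatIsoToRingEquiv.symm.toEquiv
  let 𝒰 := (Limits.pullback f t).affineCover.finiteSubcover
  have : Finite {s // s ≫ g = 𝟙 (Spec R)} :=
    finite_lifts_of_openCover g (𝟙 (Spec R)) 𝒰 fun i ↦ finite_lifts_of_isAffine (𝒰.f i ≫ g) _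
  exact finite_lifts_of_finite_sections_pullback f t

theorem hom_ext_of_localization_atMaximal {R : CommRingCat.{u}} [IsArtinianRing R]
    {s s' : Spec R ⟶ X}
    (h : ∀ m : MaximalSpectrum R,
      Spec.map (CommRingCat.ofHom (algebraMap R (Localization.AtPrime m.asIdeal))) ≫ s =
        Spec.map (CommRingCat.ofHom (algebraMap R (Localization.AtPrime m.asIdeal))) ≫ s') :
    s = s' := by
  let localization (m : MaximalSpectrum R) := CommRingCat.of (Localization.AtPrime m.asIdeal)
  let e : R ≅ CommRingCat.of (Π m, localization m) :=
    (MaximalSpectrum.toPiLocalizationEquiv R).toRingEquiv.toCommRingCatIso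
  have ι_comp_sigmaSpec (m : MaximalSpectrum R) :
      Limits.Sigma.ι (fun m ↦ Spec (localization m)) m ≫ sigmaSpec localization ≫ Spec.map e.hom =
        Spec.map (CommRingCat.ofHom (algebraMap R (Localization.AtPrime m.asIdeal))) := by
    rw [ι_sigmaSpec_assoc, ← Spec.map_comp]
    rfl
  refine (cancel_epi (sigmaSpec localization ≫ Spec.map e.hom)).mp
    (Limits.Sigma.hom_ext _ _ fun m ↦ ?_)
  simp only [Category.assoc, reassoc_of% ι_comp_sigmaSpec m, h m]

end Lifts

theorem statement14_general {R : CommRingCat.{u}} [Finite R] {S X : Scheme.{u}} (f : X ⟶ S)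
    [QuasiCompact f] [LocallyOfFiniteType f] (t : Spec R ⟶ S) :
    Finite {s : Spec R ⟶ X // s ≫ f = t} := by
  let ι (m : MaximalSpectrum R) :=
    Spec.map (CommRingCat.ofHom (algebraMap R (Localization.AtPrime m.asIdeal)))
  have (m : MaximalSpectrum R) : Finite (Localization.AtPrime m.asIdeal) :=
    .of_surjective _ (IsArtinianRing.localization_surjective m.asIdeal.primeCompl _)
  have (m : MaximalSpectrum R) := finite_lifts_of_isLocalRing f (ι m ≫ t)
  refine Finite.of_injective
    (β := Π m, {s // s ≫ f = ι m ≫ t})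
    (fun s m ↦ ⟨ι m ≫ s.1, by rw [Category.assoc, s.2]⟩) fun s s' h ↦ ?_
  exact Subtype.ext (hom_ext_of_localization_atMaximal fun m ↦ congr(($h m).1))

/-- if `k` is a finite field and `f : X ⟶ Spec k` is a quasi-compact morphism
of schemes that is locally of finite type, then the set of `k`-rational points of `X`
(sections of `f`) is finite. -/
theorem statement14 (k : Type) [Field k] [Finite k]
    (X : Scheme.{0}) (f : X ⟶ Spec (CommRingCat.of k))
    [QuasiCompact f] [LocallyOfFiniteType f] :
    Finite {s : Spec (CommRingCat.of k) ⟶ X // s ≫ f = 𝟙 (Spec (CommRingCat.of k))} :=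
  statement14_general f (𝟙 _)
end

section
/- Let R be a local commutative ring with maximal ideal m, and assume R is m-adically separated and complete (that is, the canonical map from R to the inverse limit of the quotients R/m^k is an isomorphism). Then for every scheme X, the canonical map from the set of scheme morphisms Spec R → X to the inverse limit over k ≥ 1 of the sets of scheme morphisms Spec(R/m^k) → X (given by composing with the morphisms induced by the projections R → R/m^k) is a bijection. -/
open AlgebraicGeometry CategoryTheory IsLocalRing

noncomputable section

variable (R : Type) [CommRing R] [IsLocalRing R]

/-- The transition morphism `Spec (R ⧸ m ^ (k+1)) ⟶ Spec (R ⧸ m ^ (l+1))` for `k ≤ l`,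
induced by the canonical projection `R ⧸ m ^ (l+1) → R ⧸ m ^ (k+1)`. -/
def specTransition (k l : ℕ) (h : k ≤ l) :
    Spec (CommRingCat.of (R ⧸ maximalIdeal R ^ (k + 1))) ⟶
      Spec (CommRingCat.of (R ⧸ maximalIdeal R ^ (l + 1))) :=
  Spec.map (CommRingCat.ofHom
    (Ideal.Quotient.factor (S := maximalIdeal R ^ (l + 1)) (T := maximalIdeal R ^ (k + 1))
      (Ideal.pow_le_pow_right (by omega))))

/-- The canonical morphism `Spec (R ⧸ m ^ (k+1)) ⟶ Spec R`. -/
def specProj (k : ℕ) :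
    Spec (CommRingCat.of (R ⧸ maximalIdeal R ^ (k + 1))) ⟶ Spec (CommRingCat.of R) :=
  Spec.map (CommRingCat.ofHom (Ideal.Quotient.mk (maximalIdeal R ^ (k + 1))))

lemma specTransition_comp_specProj (k l : ℕ) (h : k ≤ l) :
    specTransition R k l h ≫ specProj R l = specProj R k := by
  dsimp [specTransition, specProj]
  rw [← Spec.map_comp]
  congr 1

/-- The canonical map from `X (Spec R)` to the inverse limit of the `X (Spec (R ⧸ m ^ k))`,
sending a morphism `φ : Spec R ⟶ X` to the compatible family of its composites with the
canonical morphisms `Spec (R ⧸ m ^ (k+1)) ⟶ Spec R`. -/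
def toInverseLimit (X : Scheme.{0}) (φ : Spec (CommRingCat.of R) ⟶ X) :
    { s : ∀ k : ℕ, Spec (CommRingCat.of (R ⧸ maximalIdeal R ^ (k + 1))) ⟶ X //
        ∀ (k l : ℕ) (h : k ≤ l), specTransition R k l h ≫ s l = s k } :=
  ⟨fun k => specProj R k ≫ φ, by
    intro k l h
    rw [← Category.assoc, specTransition_comp_specProj]⟩

/-! A morphism from the spectrum of a local ring `S` to `X` amounts to a point `x` of `X`, the image
of the closed point, together with a local homomorphism from the stalk of `X` at `x` to `S`. Local
homomorphisms preserve closed points, so `x` is constant along a compatible family over a connected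
diagram of local rings, and what remains is a compatible family of ring homomorphisms out of one
fixed stalk, which lifts uniquely to the limit. An adically complete local ring is such a limit. -/

section

open Limits

universe u

lemma existsUnique_specMap_comp_fromSpecStalk_eq {S : CommRingCat.{u}} [IsLocalRing S]
    {X : Scheme.{u}} {x : X} (f : Spec S ⟶ X) (hx : f (closedPoint S) = x) :
    ∃! ψ : X.presheaf.stalk x ⟶ S, Spec.map ψ ≫ X.fromSpecStalk x = f := by
  subst hx
  have factorization := Scheme.Spec_stalkClosedPointTo_fromSpecStalk f
  refine ⟨Scheme.stalkClosedPointTo f, factorization, fun ψ hψ => Spec.map_injective ?_⟩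
  rw [← cancel_mono (X.fromSpecStalk _), hψ, factorization]

lemma specMap_comp_closedPoint {S T : CommRingCat.{u}} [IsLocalRing S] [IsLocalRing T]
    (g : S ⟶ T) [IsLocalHom g.hom] {X : Scheme.{u}} (f : Spec S ⟶ X) :
    (Spec.map g ≫ f) (closedPoint T) = f (closedPoint S) :=
  (Scheme.Hom.comp_apply _ _ _).trans (congrArg f Spec_closedPoint)

theorem existsUnique_specMap_π_comp_eq_of_isLimit {J : Type*} [Category* J] [IsConnected J]
    {F : J ⥤ CommRingCat.{u}} [∀ j, IsLocalRing (F.obj j)]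
    [∀ i j (α : i ⟶ j), IsLocalHom (F.map α).hom]
    {c : Cone F} [IsLocalRing c.pt] [∀ j, IsLocalHom (c.π.app j).hom] (hc : IsLimit c)
    {X : Scheme.{u}} (s : ∀ j, Spec (F.obj j) ⟶ X)
    (hs : ∀ i j (α : i ⟶ j), Spec.map (F.map α) ≫ s i = s j) :
    ∃! φ : Spec c.pt ⟶ X, ∀ j, Spec.map (c.π.app j) ≫ φ = s j := by
  obtain ⟨x, hx⟩ : ∃ x, ∀ j, s j (closedPoint (F.obj j)) = x :=
    constant_of_preserves_morphisms' _ fun i j α => by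
      rw [← hs i j α, specMap_comp_closedPoint]
  choose ψ hψ ψ_unique using fun j => existsUnique_specMap_comp_fromSpecStalk_eq (s j) (hx j)
  let stalkCone : Cone F :=
    { pt := X.presheaf.stalk x
      π.app := ψ
      π.naturality i j α := by
        have : ψ i ≫ F.map α = ψ j := ψ_unique j _ <| by
          simp only [Spec.map_comp, Category.assoc, hψ, hs]
        simpa using this.symm }
  refine ⟨Spec.map (hc.lift stalkCone) ≫ X.fromSpecStalk x, fun j => ?_, fun φ hφ => ?_⟩
  · rw [← Spec.map_comp_assoc, hc.fac, hψ]
  · have φ_closedPoint : φ (closedPoint c.pt) = x := by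
      let j := Classical.arbitrary J
      rw [← hx j, ← hφ j]
      exact (specMap_comp_closedPoint (S := c.pt) (c.π.app j) φ).symm
    obtain ⟨θ, rfl, -⟩ := existsUnique_specMap_comp_fromSpecStalk_eq φ φ_closedPoint
    have : θ = hc.lift stalkCone := hc.uniq stalkCone θ fun j => ψ_unique j _ <|
      (Spec.map_comp_assoc _ _ _).trans (hφ j)
    rw [this]

variable {A : Type u} [CommRing A] (I : Ideal A)

/-- The inverse system `⋯ → A ⧸ I ^ 2 → A ⧸ I` of commutative rings. The exponents start at `1`,
so that all its terms are local rings if `A` is local and `I` is proper. -/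
def adicSystem : ℕᵒᵖ ⥤ CommRingCat.{u} where
  obj k := .of (A ⧸ I ^ (k.unop + 1))
  map α := CommRingCat.ofHom (Ideal.Quotient.factorPow I (Nat.add_le_add_right α.unop.le 1))

/-- The cone over `adicSystem I` formed by the projections `A → A ⧸ I ^ (k + 1)`. -/
def adicCone : Cone (adicSystem I) where
  pt := .of A
  π := { app k := CommRingCat.ofHom (Ideal.Quotient.mk (I ^ (k.unop + 1))) }

/-- An `I`-adically complete ring is the limit of its quotients by the powers of `I`. -/
def adicConeIsLimit [IsAdicComplete I A] : IsLimit (adicCone I) :=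
  have strictMono_succ : StrictMono fun n : ℕ => n + 1 := strictMono_id.add_const 1
  let component (s : Cone (adicSystem I)) (n : ℕ) : s.pt →+* A ⧸ I ^ (n + 1) :=
    (s.π.app (.op n)).hom
  have compatible (s : Cone (adicSystem I)) {m : ℕ} :
      (Ideal.Quotient.factorPow I (strictMono_succ.monotone m.le_succ)).comp (component s (m + 1)) =
        component s m :=
    congrArg CommRingCat.Hom.hom (s.w (homOfLE m.le_succ).op)
  { lift s := CommRingCat.ofHom <|
      IsAdicComplete.StrictMono.liftRingHom I strictMono_succ (component s) (compatible s)
    fac s k := CommRingCat.hom_ext <|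
      IsAdicComplete.StrictMono.mk_comp_liftRingHom I strictMono_succ (component s) (compatible s)
        (n := k.unop)
    uniq s g hg := CommRingCat.hom_ext <|
      IsAdicComplete.StrictMono.eq_liftRingHom I strictMono_succ (component s) (compatible s)
        (F := g.hom) fun n => congrArg CommRingCat.Hom.hom (hg (.op n)) }

lemma isLocalRing_quotient_pow_succ [IsLocalRing A] {I : Ideal A} (hI : I ≠ ⊤) (k : ℕ) :
    IsLocalRing (A ⧸ I ^ (k + 1)) :=
  have : Nontrivial (A ⧸ I ^ (k + 1)) := Ideal.Quotient.nontrivial_iff.mpr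
    (ne_top_of_le_ne_top hI (Ideal.pow_le_self k.succ_ne_zero))
  .of_surjective' _ Ideal.Quotient.mk_surjective

lemma ne_top_of_isAdicComplete [Nontrivial A] [IsAdicComplete I A] : I ≠ ⊤ := by
  rintro rfl
  exact bot_ne_top (Ideal.jacobson_eq_top_iff.mp
    (top_le_iff.mp (IsAdicComplete.le_jacobson_bot (⊤ : Ideal A))))

theorem statement15_general [IsLocalRing A] [IsAdicComplete I A] {X : Scheme.{u}}
    (s : ∀ k : ℕ, Spec (CommRingCat.of (A ⧸ I ^ (k + 1))) ⟶ X)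
    (hs : ∀ (k l : ℕ) (h : k ≤ l), Spec.map (CommRingCat.ofHom
      (Ideal.Quotient.factorPow I (Nat.add_le_add_right h 1))) ≫ s l = s k) :
    ∃! φ : Spec (CommRingCat.of A) ⟶ X, ∀ k : ℕ,
      Spec.map (CommRingCat.ofHom (Ideal.Quotient.mk (I ^ (k + 1)))) ≫ φ = s k := by
  have quotient_isLocalRing := isLocalRing_quotient_pow_succ (ne_top_of_isAdicComplete I)
  have (k : ℕᵒᵖ) : IsLocalRing ((adicSystem I).obj k) := quotient_isLocalRing k.unop
  have (k l : ℕᵒᵖ) (α : k ⟶ l) : IsLocalHom ((adicSystem I).map α).hom :=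
    .of_surjective (Ideal.Quotient.factorPow I (Nat.add_le_add_right α.unop.le 1))
      (Ideal.Quotient.factor_surjective _)
  have : IsLocalRing (adicCone I).pt := ‹IsLocalRing A›
  have (k : ℕᵒᵖ) : IsLocalHom ((adicCone I).π.app k).hom :=
    .of_surjective (Ideal.Quotient.mk (I ^ (k.unop + 1))) Ideal.Quotient.mk_surjective
  have := existsUnique_specMap_π_comp_eq_of_isLimit (adicConeIsLimit I) (fun k => s k.unop)
    fun k l α => hs l.unop k.unop α.unop.le
  simpa only [Opposite.op_surjective.forall] using! this

end

/-- if `R` is a local ring which is separated and complete for the topology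
defined by its maximal ideal `m` (i.e. `R ≃ lim R ⧸ m ^ k`), then for every scheme `X` the
canonical map `X (Spec R) → lim_k X (Spec (R ⧸ m ^ k))` is a bijection. -/
theorem statement15 [IsAdicComplete (maximalIdeal R) R] (X : Scheme.{0}) :
    Function.Bijective (toInverseLimit R X) := by
  refine (Function.bijective_iff_existsUnique _).mpr fun s => ?_
  simpa only [Subtype.ext_iff, funext_iff] using! statement15_general (maximalIdeal R) s.1 s.2

end
end
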